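/- arXiv:2105.03924 — 4 statements merged into one kernel-verified Lean document; each statement's English description precedes it below -/
import Mathlib

section
/- Let I be a finite set of trains and N a finite set of nodes with capacity function c : N → ℕ, and let a, b : I → N be placements that are both safe. Then there exists a bijection σ : Fin |I| → I such that for every k with 0 ≤ k ≤ |I|, writing S_k = {σ m : m < k} and x_{S_k} for the intermediate placement of a, b and S_k, the capacity constraints are respected at every intermediate state: for every node n, the number of trains j with x_{S_k} j = n is at most c n. -/
/-- A placement `x : I → N` is *safe* if every node has a strictly free slot. -/
def SafePlacement {I N : Type*} [Fintype I] [DecidableEq N]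
    (c : N → ℕ) (x : I → N) : Prop :=
  ∀ n : N, (Finset.univ.filter (fun i : I => x i = n)).card < c n

/-!
Move the trains greedily, maintaining the invariant that all capacities are respected and at most
one node is full. If some node `v` is full, then `b` places fewer trains at `v` than are there now,
so some train now at `v` has not moved yet; move that one. If no node is full, move any
remaining train. Either way every node has a free slot while the train is off the network, so after
the move only its destination can be full.
-/

open Finset Function

section Enumeration

variable {α : Type*} [Fintype α] [DecidableEq α] {P : Finset α → Prop}

theorem exists_nodup_list_forall_prefix (empty : P ∅)
    (step : ∀ S, S ≠ univ → P S → ∃ i ∉ S, P (insert i S)) {k : ℕ} (hk : k ≤ Fintype.card α) :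
    ∃ l : List α, l.Nodup ∧ l.length = k ∧ ∀ p, p <+: l → P p.toFinset := by
  induction k with
  | zero => exact ⟨[], List.nodup_nil, rfl, by simpa using empty⟩
  | succ k ih =>
    obtain ⟨l, nodup, length_eq, prefixes⟩ := ih (by lia)
    have ne_univ : l.toFinset ≠ univ := by
      rw [← card_lt_iff_ne_univ, List.toFinset_card_of_nodup nodup]
      lia
    obtain ⟨i, hi, hP⟩ := step _ ne_univ (prefixes l (List.prefix_refl l))
    refine ⟨l ++ [i], ?_, by simp [length_eq], fun p hp => ?_⟩
    · simpa using nodup.concat (by simpa using hi)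
    · rcases List.prefix_concat_iff.mp hp with rfl | hp
      · simpa [union_comm] using hP
      · exact prefixes p hp

theorem exists_equiv_fin_forall_initial (empty : P ∅)
    (step : ∀ S, S ≠ univ → P S → ∃ i ∉ S, P (insert i S)) :
    ∃ σ : Fin (Fintype.card α) ≃ α,
      ∀ k : ℕ, P {j | ∃ m : Fin (Fintype.card α), (m : ℕ) < k ∧ σ m = j} := by
  obtain ⟨l, nodup, length_eq, prefixes⟩ := exists_nodup_list_forall_prefix empty step le_rfl
  have toFinset_eq : l.toFinset = univ :=
    eq_univ_of_card _ ((List.toFinset_card_of_nodup nodup).trans length_eq)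
  have mem (i : α) : i ∈ l := by simp [← List.mem_toFinset, toFinset_eq]
  refine ⟨(finCongr length_eq.symm).trans (nodup.getEquivOfForallMemList l mem), fun k => ?_⟩
  convert prefixes _ (List.take_prefix k l) using 1
  ext j
  have initial_iff : (∃ m : Fin (Fintype.card α), (m : ℕ) < k ∧ l[m] = j) ↔ j ∈ l.take k := by
    simp only [List.mem_take_iff_getElem, Fin.exists_iff, lt_min_iff, length_eq]
    grind
  simpa using initial_iff

end Enumeration

section Placement

variable {I N : Type*} [Fintype I] [DecidableEq N]

/-- The number of trains that the placement `x` puts at the node `n`. -/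
def nodeLoad (x : I → N) (n : N) : ℕ :=
  #{i | x i = n}

/-- A placement is *almost safe* if it respects all capacities and at most one node is full. This is
the invariant of the greedy procedure. -/
def AlmostSafePlacement (c : N → ℕ) (x : I → N) : Prop :=
  (∀ n, nodeLoad x n ≤ c n) ∧ {n | nodeLoad x n = c n}.Subsingleton

variable {c : N → ℕ} {a b x : I → N}

theorem SafePlacement.almostSafePlacement (hx : SafePlacement c x) : AlmostSafePlacement c x :=
  ⟨fun n => (hx n).le, fun n hn => absurd hn (hx n).ne⟩

variable [DecidableEq I]

theorem nodeLoad_eq_card_erase_add (x : I → N) (i : I) (n : N) :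
    nodeLoad x n = #{j ∈ univ.erase i | x j = n} + if x i = n then 1 else 0 := by
  simp only [nodeLoad, card_filter]
  exact (sum_erase_add _ _ (mem_univ i)).symm

theorem nodeLoad_update (x : I → N) (i : I) (m n : N) :
    nodeLoad (update x i m) n = #{j ∈ univ.erase i | x j = n} + if m = n then 1 else 0 := by
  rw [nodeLoad_eq_card_erase_add _ i, update_self]
  congr 2
  exact filter_congr fun j hj => by rw [update_of_ne (ne_of_mem_erase hj)]

theorem almostSafePlacement_update {i : I} (load_le : ∀ n, nodeLoad x n ≤ c n)
    (full : ∀ n, nodeLoad x n = c n → x i = n) (m : N) :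
    AlmostSafePlacement c (update x i m) := by
  have erase_lt (n : N) : #{j ∈ univ.erase i | x j = n} < c n := by
    have load_eq := nodeLoad_eq_card_erase_add x i n
    split_ifs at load_eq with hi
    · have := load_le n
      lia
    · have := (load_le n).lt_of_ne (mt (full n) hi)
      lia
  have eq_of_full {n : N} (hn : nodeLoad (update x i m) n = c n) : m = n := by
    by_contra hne
    rw [nodeLoad_update, if_neg hne, add_zero] at hn
    exact (erase_lt n).ne hn
  refine ⟨fun n => ?_, fun n hn n' hn' => (eq_of_full hn).symm.trans (eq_of_full hn')⟩
  have := erase_lt n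
  rw [nodeLoad_update]
  split_ifs <;> lia

theorem exists_notMem_eq_of_nodeLoad_lt {S : Finset I} {v : N}
    (h : nodeLoad b v < nodeLoad (S.piecewise b a) v) : ∃ i ∉ S, a i = v := by
  obtain ⟨i, hi, hbi⟩ := exists_mem_notMem_of_card_lt_card h
  rw [mem_filter_univ] at hi hbi
  have hiS : i ∉ S := fun hiS => hbi (by rwa [piecewise_eq_of_mem _ _ _ hiS] at hi)
  exact ⟨i, hiS, by rwa [piecewise_eq_of_notMem _ _ _ hiS] at hi⟩

theorem AlmostSafePlacement.exists_insert {S : Finset I}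
    (hS : AlmostSafePlacement c (S.piecewise b a)) (hb : SafePlacement c b) (hne : S ≠ univ) :
    ∃ i ∉ S, AlmostSafePlacement c ((insert i S).piecewise b a) := by
  obtain ⟨load_le, full_subsingleton⟩ := hS
  obtain ⟨i, hi, full⟩ : ∃ i ∉ S, ∀ n, nodeLoad (S.piecewise b a) n = c n → a i = n := by
    by_cases hfull : ∃ v, nodeLoad (S.piecewise b a) v = c v
    · obtain ⟨v, hv⟩ := hfull
      obtain ⟨i, hi, hiv⟩ := exists_notMem_eq_of_nodeLoad_lt ((hb v).trans_eq hv.symm)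
      exact ⟨i, hi, fun n hn => hiv.trans (full_subsingleton hv hn)⟩
    · obtain ⟨i, hi⟩ := not_forall.mp (mt eq_univ_iff_forall.mpr hne)
      exact ⟨i, hi, fun n hn => absurd ⟨n, hn⟩ hfull⟩
  refine ⟨i, hi, ?_⟩
  rw [piecewise_insert]
  exact almostSafePlacement_update load_le (by rwa [piecewise_eq_of_notMem _ _ _ hi]) (b i)

theorem safe_to_safe_capacity_respected_general (ha : AlmostSafePlacement c a)
    (hb : SafePlacement c b) :
    ∃ σ : Fin (Fintype.card I) ≃ I,
      ∀ k : ℕ, AlmostSafePlacement c fun j =>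
        if ∃ m : Fin (Fintype.card I), (m : ℕ) < k ∧ σ m = j then b j else a j := by
  obtain ⟨σ, hσ⟩ := exists_equiv_fin_forall_initial
    (P := fun S => AlmostSafePlacement c (S.piecewise b a)) (by rwa [piecewise_empty])
    fun S hne hS => hS.exists_insert hb hne
  refine ⟨σ, fun k => ?_⟩
  convert hσ k using 2 with j
  simp [Finset.piecewise]

end Placement

/-- there is an order `σ` in which trains can be moved from their
`a`-positions to their `b`-positions such that at every intermediate state
(after the first `k` trains have moved) the capacity constraints hold at every
node. -/
theorem safe_to_safe_capacity_respected
    {I N : Type*} [Fintype I] [DecidableEq I] [Fintype N] [DecidableEq N]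
    (c : N → ℕ) (a b : I → N)
    (ha : SafePlacement c a) (hb : SafePlacement c b) :
    ∃ σ : Fin (Fintype.card I) ≃ I,
      ∀ k : ℕ, k ≤ Fintype.card I →
        ∀ n : N,
          (Finset.univ.filter (fun j : I =>
              (if ∃ m : Fin (Fintype.card I), (m : ℕ) < k ∧ σ m = j then b j else a j) = n)).card
            ≤ c n := by
  obtain ⟨σ, hσ⟩ := safe_to_safe_capacity_respected_general ha.almostSafePlacement hb
  exact ⟨σ, fun k _ => (hσ k).1⟩
end

section
/- Let I be a finite set of trains and N a finite set of nodes with capacity function c : N → ℕ. Let a, b : I → N be placements and let m be a node such that the number of trains j with b j = m is strictly less than c m. Let S ⊆ I and let x_S be the intermediate placement of a, b and S. If the number of trains j with x_S j = m is at least c m, then there exists a train j ∉ S with a j = m (in particular x_S j = m); that is, whenever a node is filled to capacity at an intermediate state, it hosts a train that has not yet been moved. -/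
open scoped Cardinal

universe u

theorem diff_nonempty_of_mk_lt_mk_ite {α : Type u} {s t t' : Set α} (h : #t < #(s.ite t t')) :
    (t' \ s).Nonempty := by
  by_contra hempty
  have hsub : s.ite t t' ⊆ t := by
    rw [Set.ite, Set.not_nonempty_iff_eq_empty.mp hempty, Set.union_empty]
    exact Set.inter_subset_left
  exact h.not_ge (Cardinal.mk_le_mk_of_subset hsub)

theorem mk_preimage_singleton_eq_card_filter {α : Type u} {β : Type*} [Fintype α] [DecidableEq β]
    (f : α → β) (y : β) :
    #(f ⁻¹' {y}) = (Finset.univ.filter (fun x : α => f x = y)).card :=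
  (Cardinal.mk_fintype {x // f x = y}).trans (congrArg Nat.cast (Fintype.card_subtype _))

theorem full_node_hosts_unmoved_train_general {I : Type u} {N : Type*} (c : N → Cardinal.{u})
    (a b : I → N) (m : N) (hbm : #(b ⁻¹' {m}) < c m)
    (S : Set I) [∀ j, Decidable (j ∈ S)] (hfull : c m ≤ #(S.piecewise b a ⁻¹' {m})) :
    ∃ j, j ∉ S ∧ a j = m ∧ S.piecewise b a j = m := by
  rw [Set.piecewise_preimage] at hfull
  obtain ⟨j, haj, hjS⟩ := diff_nonempty_of_mk_lt_mk_ite (hbm.trans_le hfull)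
  exact ⟨j, hjS, haj, (S.piecewise_eq_of_notMem b a hjS).trans haj⟩

/-- if a node `m` is filled to capacity at an intermediate
placement (trains in `S` are at their `b`-positions, the others at their
`a`-positions), and `m` has a free slot in the terminal placement `b`, then
node `m` hosts a train that has not yet been moved. -/
theorem full_node_hosts_unmoved_train
    {I N : Type*} [Fintype I] [DecidableEq I] [Fintype N] [DecidableEq N]
    (c : N → ℕ) (a b : I → N) (m : N)
    (hbm : (Finset.univ.filter (fun j : I => b j = m)).card < c m)
    (S : Finset I)
    (hfull : c m ≤ (Finset.univ.filter (fun j : I =>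
        (if j ∈ S then b j else a j) = m)).card) :
    ∃ j : I, j ∉ S ∧ a j = m ∧ (if j ∈ S then b j else a j) = m := by
  apply full_node_hosts_unmoved_train_general (fun n => c n) a b m _ (S : Set I)
  all_goals rw [mk_preimage_singleton_eq_card_filter]; assumption_mod_cast
end

section
/- Let I be a nonempty finite set of trains and N a finite set of nodes with capacity function c : N → ℕ, let a, b : I → N be placements that are both safe, and let i₀ ∈ I be an arbitrary train. Then there exists a bijection σ : Fin |I| → I with σ 0 = i₀ such that for every step k < |I|, writing S_k = {σ m : m < k} and x_{S_k} for the intermediate placement of a, b and S_k, for every node n the number of trains j with j ≠ σ k and x_{S_k} j = n is strictly less than c n. (The first train to be moved may be chosen arbitrarily.) -/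
/-!
Call a placement safe except for a train `i` if it is safe once `i` is taken off the network. This
does not depend on where `i` stands, so it survives moving `i`; only the node now holding `i` can
then be full. If that node is full, it holds more trains than in the safe target placement, so one
of them has not been moved yet; taking that train off frees the same slot as taking off `i`, so it
can be moved next. If no node is full, any unmoved train can be moved.
-/

open Finset

section Enumeration

variable {I : Type*} [Fintype I] [DecidableEq I] {P : Finset I → I → Prop}

lemma exists_list_forall_take_of_forall_exists
    (hP : ∀ S i, i ∉ S → P S i → insert i S ≠ univ → ∃ j ∉ insert i S, P (insert i S) j)
    {S : Finset I} {i : I} (hi : i ∉ S) (hPi : P S i) :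
    ∃ l : List I, (i :: l).Nodup ∧ (∀ j, j ∈ i :: l ↔ j ∉ S) ∧
      ∀ (k : ℕ) (hk : k < (i :: l).length), P (S ∪ ((i :: l).take k).toFinset) (i :: l)[k] := by
  induction hn : #Sᶜ generalizing S i with
  | zero =>
    have huniv : S = univ := by simpa using hn
    exact absurd (huniv ▸ mem_univ i) hi
  | succ n ih =>
    by_cases huniv : insert i S = univ
    · refine ⟨[], by simp, fun j ↦ ?_, fun k hk ↦ ?_⟩
      · have hj : j ∈ insert i S := huniv ▸ mem_univ j
        grind
      · obtain rfl : k = 0 := by simpa using hk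
        simpa using hPi
    · obtain ⟨j, hj, hPj⟩ := hP S i hi hPi huniv
      have hcard : #(insert i S)ᶜ = n := by
        rw [compl_insert, card_erase_of_mem (mem_compl.2 hi), hn, Nat.add_sub_cancel]
      obtain ⟨l, hnodup, hmem, hl⟩ := ih hj hPj hcard
      refine ⟨j :: l, List.nodup_cons.2 ⟨by simp [hmem], hnodup⟩, fun m ↦ ?_, fun k hk ↦ ?_⟩
      · rw [List.mem_cons, hmem]
        grind
      · cases k with
        | zero => simpa using hPi
        | succ k => simpa [insert_union, union_insert] using hl k (by simpa using hk)

lemma exists_equiv_fin_forall_image_Iio_of_forall_exists {i₀ : I} (h₀ : P ∅ i₀)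
    (hP : ∀ S i, i ∉ S → P S i → insert i S ≠ univ → ∃ j ∉ insert i S, P (insert i S) j) :
    ∃ σ : Fin (Fintype.card I) ≃ I, σ ⟨0, Fintype.card_pos_iff.2 ⟨i₀⟩⟩ = i₀ ∧
      ∀ k, P ((Iio k).image σ) (σ k) := by
  obtain ⟨l, hnodup, hmem, hl⟩ :=
    exists_list_forall_take_of_forall_exists hP (notMem_empty i₀) h₀
  let e := hnodup.getEquivOfForallMemList (i₀ :: l) fun j ↦ (hmem j).2 (notMem_empty j)
  have hlength : Fintype.card I = (i₀ :: l).length := by simpa using (Fintype.card_congr e).symm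
  refine ⟨(finCongr hlength).trans e, rfl, fun k ↦ ?_⟩
  have himage : (Iio k).image ((finCongr hlength).trans e) = ((i₀ :: l).take k).toFinset := by
    ext j
    simp only [mem_image, mem_Iio, List.mem_toFinset, List.mem_take_iff_getElem]
    constructor
    · rintro ⟨m, hm, rfl⟩
      exact ⟨m, lt_min hm (hlength ▸ m.2), rfl⟩
    · rintro ⟨m, hm, rfl⟩
      have hmk : m < k := hm.trans_le (min_le_left _ _)
      exact ⟨⟨m, hmk.trans k.2⟩, hmk, rfl⟩
  have htake := hl k (hlength ▸ k.2)
  rw [empty_union] at htake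
  rw [himage]
  exact htake

end Enumeration

section Placements

variable {I N : Type*} [Fintype I] [DecidableEq I] [DecidableEq N]
  {c : N → ℕ} {a b x : I → N} {i j i₀ : I}

/-- The placement `x` is *safe except for `i`* if every node has a free slot when the train `i` is
not counted. This is the condition under which `i` may move. -/
def SafeExcept (c : N → ℕ) (x : I → N) (i : I) : Prop :=
  ∀ n, #{j | j ≠ i ∧ x j = n} < c n

lemma card_filter_ne_and_eq (x : I → N) (i : I) (n : N) :
    #{j | j ≠ i ∧ x j = n} = if x i = n then #{j | x j = n} - 1 else #{j | x j = n} := by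
  rw [filter_and, filter_ne', erase_inter, univ_inter, card_erase_eq_ite]
  simp

lemma SafePlacement.safeExcept (hx : SafePlacement c x) (i : I) : SafeExcept c x i := fun n ↦
  (card_le_card (monotone_filter_right _ fun _ _ h ↦ h.2)).trans_lt (hx n)

namespace SafeExcept

lemma update (hx : SafeExcept c x i) (n : N) : SafeExcept c (Function.update x i n) i := by
  intro m
  rw [filter_congr fun j _ ↦ and_congr_right fun hj : j ≠ i ↦ by rw [Function.update_of_ne hj]]
  exact hx m

lemma of_eq (hx : SafeExcept c x i) (hij : x i = x j) : SafeExcept c x j := by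
  intro n
  rw [card_filter_ne_and_eq, ← hij, ← card_filter_ne_and_eq]
  exact hx n

lemma card_filter_lt_of_ne (hx : SafeExcept c x i) {n : N} (hn : x i ≠ n) :
    #{j | x j = n} < c n := by
  simpa [card_filter_ne_and_eq, hn] using hx n

lemma exists_ne_of_not_safePlacement (hx : SafeExcept c x i) (hx' : ¬ SafePlacement c x)
    (hb : SafePlacement c b) : ∃ j, x j ≠ b j ∧ SafeExcept c x j := by
  obtain ⟨n, hfull⟩ : ∃ n, c n ≤ #{j | x j = n} := by
    simpa only [SafePlacement, not_forall, not_lt] using hx'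
  have hi : x i = n := by
    by_contra hn
    exact hfull.not_gt (hx.card_filter_lt_of_ne hn)
  obtain ⟨j, hxj, hbj⟩ := exists_mem_notMem_of_card_lt_card ((hb n).trans_le hfull)
  rw [mem_filter_univ] at hxj hbj
  exact ⟨j, fun h ↦ hbj (h ▸ hxj), hx.of_eq (hi.trans hxj.symm)⟩

lemma exists_notMem_piecewise {S : Finset I} (hx : SafeExcept c (S.piecewise b a) i)
    (hb : SafePlacement c b) (hS : S ≠ univ) :
    ∃ j ∉ S, SafeExcept c (S.piecewise b a) j := by
  by_cases hsafe : SafePlacement c (S.piecewise b a)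
  · obtain ⟨j, hj⟩ : ∃ j, j ∉ S := by simpa [eq_univ_iff_forall] using hS
    exact ⟨j, hj, hsafe.safeExcept j⟩
  · obtain ⟨j, hne, hj⟩ := hx.exists_ne_of_not_safePlacement hsafe hb
    exact ⟨j, fun hjS ↦ hne (S.piecewise_eq_of_mem b a hjS), hj⟩

end SafeExcept

theorem safe_to_safe_enumeration_first_train_arbitrary_general
    (ha : SafeExcept c a i₀) (hb : SafePlacement c b) :
    ∃ σ : Fin (Fintype.card I) ≃ I, σ ⟨0, Fintype.card_pos_iff.2 ⟨i₀⟩⟩ = i₀ ∧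
      ∀ k, SafeExcept c (((Iio k).image σ).piecewise b a) (σ k) := by
  refine exists_equiv_fin_forall_image_Iio_of_forall_exists
    (P := fun S i ↦ SafeExcept c (S.piecewise b a) i) (by simpa using ha) ?_
  intro S i _ hi hS
  have hmoved : SafeExcept c ((insert i S).piecewise b a) i := by
    rw [piecewise_insert]
    exact hi.update (b i)
  exact hmoved.exists_notMem_piecewise hb hS

end Placements

/-- trains can be moved one at a time from their `a`-positions to
their `b`-positions in some order `σ` whose first train is the arbitrarily
chosen `i₀`, such that at the moment each train moves every node has a free
slot when the moving train itself is not counted. -/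
theorem safe_to_safe_enumeration_first_train_arbitrary
    {I N : Type*} [Fintype I] [Nonempty I] [DecidableEq I] [Fintype N] [DecidableEq N]
    (c : N → ℕ) (a b : I → N)
    (ha : SafePlacement c a) (hb : SafePlacement c b) (i₀ : I) :
    ∃ σ : Fin (Fintype.card I) ≃ I,
      σ ⟨0, Fintype.card_pos⟩ = i₀ ∧
      ∀ k : Fin (Fintype.card I), ∀ n : N,
        (Finset.univ.filter (fun j : I =>
            j ≠ σ k ∧
            (if ∃ m : Fin (Fintype.card I), m < k ∧ σ m = j then b j else a j) = n)).card
          < c n := by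
  simpa [SafeExcept, Finset.piecewise] using
    safe_to_safe_enumeration_first_train_arbitrary_general (ha.safeExcept i₀) hb
end

section
/- In the path-constrained railway transition system, suppose k₀, k₁, …, k_m is a sequence of configurations in which each consecutive pair (k_j, k_{j+1}) is a single move and the final configuration k_m is safe. Let s' be any safe configuration that is non-regressive with respect to k_m (i.e., k_m i ≤ s' i for every train i). Then there exists a sequence of configurations from k₀ to s', each consecutive pair of which is a single move, that has k₀, k₁, …, k_m as a prefix. (Time-wise decomposition soundness: any feasible schedule reaching a safe state can be extended, keeping all of its decisions, into a feasible schedule for any longer safe non-regressive horizon.) -/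
/-- A *single move*: one train `i` advances one step along its path, the
destination node having a free slot not counting train `i`. -/
def Move {I N : Type*} [Fintype I] [DecidableEq I] [DecidableEq N]
    (c : N → ℕ) (L : I → ℕ) (p : ∀ i : I, Fin (L i + 1) → N)
    (k k' : ∀ i : I, Fin (L i + 1)) : Prop :=
  ∃ (i : I) (h : (k i : ℕ) < L i),
    k' i = ⟨(k i : ℕ) + 1, Nat.succ_lt_succ h⟩ ∧
    (∀ j : I, j ≠ i → k' j = k j) ∧
    (Finset.univ.filter (fun j : I =>
        j ≠ i ∧ p j (k j) = p i ⟨(k i : ℕ) + 1, Nat.succ_lt_succ h⟩)).card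
      < c (p i ⟨(k i : ℕ) + 1, Nat.succ_lt_succ h⟩)

/-- Reachability: reflexive–transitive closure of the single-move relation. -/
def Reachable {I N : Type*} [Fintype I] [DecidableEq I] [DecidableEq N]
    (c : N → ℕ) (L : I → ℕ) (p : ∀ i : I, Fin (L i + 1) → N)
    (k k' : ∀ i : I, Fin (L i + 1)) : Prop :=
  Relation.ReflTransGen (Move c L p) k k'

/-- A configuration is *safe* if every node has a strictly free slot. -/
def SafeConfig {I N : Type*} [Fintype I] [DecidableEq I] [DecidableEq N]
    (c : N → ℕ) (L : I → ℕ) (p : ∀ i : I, Fin (L i + 1) → N)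
    (k : ∀ i : I, Fin (L i + 1)) : Prop :=
  ∀ n : N, (Finset.univ.filter (fun i : I => p i (k i) = n)).card < c n

/-!
A configuration is kept safe *up to one train*: deleting some train `i` leaves a free slot at every
node. Such a train may make any move, and the configuration it moves to is again safe once `i` is
deleted. The danger is that `i` has nowhere further to go. If the configuration is not safe, then
`i` stands at a full node, and since the target is safe, some train `j` at that node has to leave
it. Deleting `j` frees the same slot as deleting `i`, so `j` may be moved instead. Hence progress
towards the target is always possible.
-/

open Finset Function Relation

theorem exists_chain_extension_of_reflTransGen {α : Type*} {r : α → α → Prop} {m : ℕ} {f : ℕ → α}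
    {b : α} (hf : ∀ j < m, r (f j) (f (j + 1))) (h : ReflTransGen r (f m) b) :
    ∃ (m' : ℕ) (g : ℕ → α), m ≤ m' ∧ (∀ j ≤ m, g j = f j) ∧
      (∀ j < m', r (g j) (g (j + 1))) ∧ g m' = b := by
  induction h with
  | refl => exact ⟨m, f, le_rfl, fun _ _ => rfl, hf, rfl⟩
  | @tail x y _ hxy ih =>
    obtain ⟨m', g, hm, hprefix, hchain, rfl⟩ := ih
    have hg : ∀ j ≤ m', update g (m' + 1) y j = g j := fun j hj => update_of_ne (by lia) _ _
    refine ⟨m' + 1, update g (m' + 1) y, by lia, fun j hj => ?_, fun j hj => ?_, update_self ..⟩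
    · rw [hg j (hj.trans hm), hprefix j hj]
    · obtain hj | rfl := Nat.lt_succ_iff_lt_or_eq.mp hj
      · rw [hg j hj.le, hg (j + 1) hj]
        exact hchain j hj
      · rwa [hg j le_rfl, update_self]

section Railway

variable {I N : Type*} [Fintype I] [DecidableEq N]
  {c : N → ℕ} {L : I → ℕ} {p : ∀ i : I, Fin (L i + 1) → N} {k s : ∀ i : I, Fin (L i + 1)}
  {i j : I} {n : N}

/-- The trains standing at the node `n` in the configuration `k`. -/
def occupants (p : ∀ i : I, Fin (L i + 1) → N) (k : ∀ i : I, Fin (L i + 1)) (n : N) : Finset I :=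
  {i | p i (k i) = n}

theorem mem_occupants : i ∈ occupants p k n ↔ p i (k i) = n := by
  simp only [occupants, mem_filter_univ]

variable [DecidableEq I]

theorem safeConfig_iff_card_occupants_lt :
    SafeConfig c L p k ↔ ∀ n, #(occupants p k n) < c n :=
  Iff.rfl

theorem erase_occupants :
    (occupants p k n).erase i = ({j | j ≠ i ∧ p j (k j) = n} : Finset I) := by
  ext j
  simp only [mem_erase, mem_occupants, mem_filter_univ]

theorem erase_occupants_update (x : Fin (L i + 1)) :
    (occupants p (update k i x) n).erase i = (occupants p k n).erase i := by
  simp only [erase_occupants]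
  exact filter_congr fun j _ => and_congr_right fun hj => by rw [update_of_ne hj]

/-- The configuration `k` is safe once train `i` is deleted. This weakening of safety survives
every move of train `i`. -/
def SafeWithout (c : N → ℕ) (L : I → ℕ) (p : ∀ i : I, Fin (L i + 1) → N)
    (k : ∀ i : I, Fin (L i + 1)) (i : I) : Prop :=
  ∀ n, #((occupants p k n).erase i) < c n

theorem SafeConfig.safeWithout (hk : SafeConfig c L p k) (i : I) : SafeWithout c L p k i :=
  fun n => card_erase_le.trans_lt (hk n)

theorem safeWithout_update_iff (x : Fin (L i + 1)) :
    SafeWithout c L p (update k i x) i ↔ SafeWithout c L p k i := by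
  simp only [SafeWithout, erase_occupants_update]

theorem safeWithout_iff_of_same_node (hij : p i (k i) = p j (k j)) :
    SafeWithout c L p k i ↔ SafeWithout c L p k j := by
  simp only [SafeWithout, card_erase_eq_ite, mem_occupants, hij]

theorem SafeWithout.eq_of_le_card_occupants (hi : SafeWithout c L p k i)
    (hn : c n ≤ #(occupants p k n)) : p i (k i) = n := by
  by_contra hin
  have hlt := hi n
  rw [erase_eq_of_notMem (mt mem_occupants.mp hin)] at hlt
  exact hlt.not_ge hn

theorem SafeWithout.move_update (hi : SafeWithout c L p k i) (hL : (k i : ℕ) < L i) :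
    Move c L p k (update k i ⟨k i + 1, Nat.succ_lt_succ hL⟩) := by
  refine ⟨i, hL, update_self .., fun j hj => update_of_ne hj .., ?_⟩
  simpa only [erase_occupants] using hi _

theorem SafeConfig.exists_occupant_ne_of_le_card_occupants (hs : SafeConfig c L p s)
    (hn : c n ≤ #(occupants p k n)) : ∃ j, p j (k j) = n ∧ k j ≠ s j := by
  obtain ⟨j, hjk, hjs⟩ := exists_mem_notMem_of_card_lt_card
    ((safeConfig_iff_card_occupants_lt.mp hs n).trans_le hn)
  rw [mem_occupants] at hjk hjs
  exact ⟨j, hjk, fun h => hjs (h ▸ hjk)⟩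

theorem SafeWithout.exists_safeWithout_lt (hi : SafeWithout c L p k i) (hs : SafeConfig c L p s)
    (hlt : k < s) : ∃ j, SafeWithout c L p k j ∧ k j < s j := by
  suffices ∃ j, SafeWithout c L p k j ∧ k j ≠ s j from
    this.imp fun j hj => ⟨hj.1, (hlt.le j).lt_of_ne hj.2⟩
  by_cases hk : SafeConfig c L p k
  · exact (ne_iff.mp hlt.ne).imp fun j hj => ⟨hk.safeWithout j, hj⟩
  · obtain ⟨n, hn⟩ : ∃ n, c n ≤ #(occupants p k n) := by
      simpa only [safeConfig_iff_card_occupants_lt, not_forall, not_lt] using hk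
    obtain ⟨j, hjn, hjs⟩ := hs.exists_occupant_ne_of_le_card_occupants hn
    have hij : p i (k i) = p j (k j) := (hi.eq_of_le_card_occupants hn).trans hjn.symm
    exact ⟨j, (safeWithout_iff_of_same_node hij).mp hi, hjs⟩

theorem SafeWithout.reachable (hi : SafeWithout c L p k i) (hs : SafeConfig c L p s)
    (hle : k ≤ s) : Reachable c L p k s := by
  induction k using WellFoundedGT.induction generalizing i with
  | ind k ih =>
    obtain rfl | hlt := hle.eq_or_lt
    · exact .refl
    obtain ⟨j, hj, hjs⟩ := hi.exists_safeWithout_lt hs hlt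
    have hL : (k j : ℕ) < L j := lt_of_lt_of_le hjs (Fin.is_le (s j))
    set x : Fin (L j + 1) := ⟨k j + 1, Nat.succ_lt_succ hL⟩
    have hkx : k < update k j x := lt_update_self_iff.mpr (Nat.lt_succ_self (k j))
    have hxs : update k j x ≤ s := update_le_iff.mpr ⟨hjs, fun l _ => hle l⟩
    exact .head (hj.move_update hL) (ih _ hkx ((safeWithout_update_iff x).mpr hj) hxs)

theorem SafeConfig.reachable (hk : SafeConfig c L p k) (hs : SafeConfig c L p s) (hle : k ≤ s) :
    Reachable c L p k s := by
  cases isEmpty_or_nonempty I with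
  | inl _ => exact Subsingleton.elim k s ▸ .refl
  | inr h => exact h.elim fun i => (hk.safeWithout i).reachable hs hle

end Railway

/-- time-wise decomposition soundness: any feasible schedule
`ks 0, …, ks m` reaching a safe state can be extended, keeping it as a prefix,
into a feasible schedule ending in any safe non-regressive configuration `s'`. -/
theorem schedule_extension_prefix
    {I N : Type*} [Fintype I] [DecidableEq I] [DecidableEq N]
    (c : N → ℕ) (L : I → ℕ) (p : ∀ i : I, Fin (L i + 1) → N)
    (m : ℕ) (ks : ℕ → ∀ i : I, Fin (L i + 1))
    (hmoves : ∀ j : ℕ, j < m → Move c L p (ks j) (ks (j + 1)))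
    (hsafe : SafeConfig c L p (ks m))
    (s' : ∀ i : I, Fin (L i + 1))
    (hs' : SafeConfig c L p s')
    (hnr : ∀ i : I, ((ks m) i : ℕ) ≤ (s' i : ℕ)) :
    ∃ (m' : ℕ) (ks' : ℕ → ∀ i : I, Fin (L i + 1)),
      m ≤ m' ∧
      (∀ j : ℕ, j ≤ m → ks' j = ks j) ∧
      (∀ j : ℕ, j < m' → Move c L p (ks' j) (ks' (j + 1))) ∧
      ks' m' = s' :=
  exists_chain_extension_of_reflTransGen hmoves (hsafe.reachable hs' hnr)
end
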